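/- Let g = (a,α,φ,μ) ∈ ℝ×(0,∞)×ℝ×(0,∞) and let s(a,α,φ,μ)(x) = e^{iφ} α μ η(μ(x−a)). For X = (X₁,X₂,X₃,X₄) ∈ ℝ⁴ let V(X)(x) = X₁ ∂_a s(x) + X₂ ∂_α s(x) + X₃ ∂_φ s(x) + X₄ ∂_μ s(x), the partial derivatives being evaluated at (a,α,φ,μ). Then for all X, Y ∈ ℝ⁴: Im ∫_ℝ V(X)(x) conj(V(Y)(x)) dx = (π/2) α²μ [ (μ/α)(X₂Y₁ − X₁Y₂) + (X₄Y₁ − X₁Y₄) + (2/α)(X₃Y₂ − X₂Y₃) + (1/μ)(X₃Y₄ − X₄Y₃) ]. -/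

import Mathlib

open MeasureTheory Filter

noncomputable section

/-- `η(x) = 1/(x+i)`. -/
def eta (x : ℝ) : ℂ := 1 / (x + Complex.I)

/-- The soliton `s(a,α,φ,μ)(x) = e^{iφ} α μ η(μ(x-a))`. -/
def sol (a α φ μ : ℝ) (x : ℝ) : ℂ :=
  Complex.exp (Complex.I * φ) * α * μ * eta (μ * (x - a))

/-- `V(X) = X₁ ∂_a s + X₂ ∂_α s + X₃ ∂_φ s + X₄ ∂_μ s` at the point `(a,α,φ,μ)`. -/
def Vfield (a α φ μ : ℝ) (X : Fin 4 → ℝ) (x : ℝ) : ℂ :=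
  (X 0 : ℂ) * deriv (fun a' : ℝ => sol a' α φ μ x) a
  + (X 1 : ℂ) * deriv (fun α' : ℝ => sol a α' φ μ x) α
  + (X 2 : ℂ) * deriv (fun φ' : ℝ => sol a α φ' μ x) φ
  + (X 3 : ℂ) * deriv (fun μ' : ℝ => sol a α φ μ' x) μ

/-!
Since `η' = -η²` and `1 = (y + i) η(y)`, every tangent vector of the soliton family at
`(a, α, φ, μ)` is `e^{iφ} (A η(y) + B η(y)²)` with `y = μ(x - a)` and `A`, `B` depending only on
`α`, `μ` and `X`. The phase cancels in the Hermitian product, so the claim reduces to the Gram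
matrix of `η` and `η²` in `L²(ℝ)`. The partial fraction identity `η η̄ = (η̄ - η) / 2i` lowers
degrees until only `∫ |η|² = π` and `∫ η² = 0` remain, the latter because `η²` is the derivative
of `-η`.
-/

lemma integral_comp_mul_sub_right {E : Type*} [NormedAddCommGroup E] [NormedSpace ℝ E]
    (c d : ℝ) (f : ℝ → E) : ∫ x, f (c * (x - d)) = |c⁻¹| • ∫ y, f y := by
  rw [integral_sub_right_eq_self (fun x => f (c * x)) d, Measure.integral_comp_mul_left]

section EtaIntegrals

open ComplexConjugate
open Complex hiding eta

lemma ofReal_add_I_ne_zero (y : ℝ) : (y : ℂ) + I ≠ 0 := fun h => by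
  simpa using congrArg im h

lemma eta_eq_inv (y : ℝ) : eta y = ((y : ℂ) + I)⁻¹ := one_div _

lemma ofReal_add_I_mul_eta (y : ℝ) : ((y : ℂ) + I) * eta y = 1 :=
  mul_one_div_cancel (ofReal_add_I_ne_zero y)

lemma eta_mul_conj_eta (y : ℝ) : eta y * conj (eta y) = ((1 + y ^ 2)⁻¹ : ℝ) := by
  rw [mul_conj, eta, normSq_div, normSq_one, normSq_apply]
  simp [← sq, add_comm]

lemma eta_mul_conj_eta_eq_sub_div (y : ℝ) :
    eta y * conj (eta y) = (conj (eta y) - eta y) / (2 * I) := by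
  have h := ofReal_add_I_mul_eta y
  have h_conj : ((y : ℂ) - I) * conj (eta y) = 1 := by
    simpa [sub_eq_add_neg] using congrArg conj h
  rw [eq_div_iff (by simp)]
  linear_combination conj (eta y) * h - eta y * h_conj

lemma norm_eta_sq (y : ℝ) : ‖eta y‖ ^ 2 = (1 + y ^ 2)⁻¹ := by
  have h := eta_mul_conj_eta y
  rw [mul_conj'] at h
  exact_mod_cast h

lemma norm_eta_le_one (y : ℝ) : ‖eta y‖ ≤ 1 := by
  rw [← sq_le_one_iff₀ (norm_nonneg _), norm_eta_sq]
  exact inv_le_one_of_one_le₀ (le_add_of_nonneg_right (sq_nonneg y))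

lemma hasDerivAt_eta (y : ℝ) : HasDerivAt eta (-eta y ^ 2) y := by
  have h := (((hasDerivAt_id y).ofReal_comp).add_const I).inv (ofReal_add_I_ne_zero y)
  refine (h.congr_deriv ?_).congr_of_eventuallyEq (Eventually.of_forall eta_eq_inv)
  simp [eta_eq_inv, neg_div]

lemma continuous_eta : Continuous eta :=
  continuous_iff_continuousAt.2 fun y => (hasDerivAt_eta y).continuousAt

lemma tendsto_eta_cobounded : Tendsto eta (Bornology.cobounded ℝ) (nhds 0) := by
  have h := tendsto_inv₀_cobounded.comp ((tendsto_add_const_cobounded I).comp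
    (RCLike.tendsto_ofReal_cobounded_cobounded ℂ))
  exact h.congr fun y => (eta_eq_inv y).symm

lemma integrable_eta_pow_mul_conj_eta_pow {m n : ℕ} (hmn : 2 ≤ m + n) :
    Integrable fun y => eta y ^ m * conj (eta y) ^ n := by
  refine integrable_inv_one_add_sq.mono' ?_ (Eventually.of_forall fun y => ?_)
  · have := continuous_eta
    exact Continuous.aestronglyMeasurable (by fun_prop)
  · calc ‖eta y ^ m * conj (eta y) ^ n‖ = ‖eta y‖ ^ (m + n) := by simp [pow_add]
      _ ≤ ‖eta y‖ ^ 2 := pow_le_pow_of_le_one (norm_nonneg _) (norm_eta_le_one y) hmn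
      _ = (1 + y ^ 2)⁻¹ := norm_eta_sq y

lemma integral_eta_sq : ∫ y, eta y ^ 2 = 0 := by
  have h_int : Integrable fun y => eta y ^ 2 := by
    simpa using integrable_eta_pow_mul_conj_eta_pow (m := 2) (n := 0) le_rfl
  have h := integral_of_hasDerivAt_of_tendsto hasDerivAt_eta h_int.neg
    (tendsto_eta_cobounded.mono_left IsOrderBornology.atBot_le_cobounded)
    (tendsto_eta_cobounded.mono_left IsOrderBornology.atTop_le_cobounded)
  simpa [integral_neg] using h

lemma integral_conj_eta_pow_mul_eta_pow (m n : ℕ) :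
    ∫ y, eta y ^ n * conj (eta y) ^ m = conj (∫ y, eta y ^ m * conj (eta y) ^ n) := by
  rw [← integral_conj]
  simp [mul_comm]

lemma integral_eta_pow_succ_mul_conj_eta_pow_succ {m n : ℕ} (hmn : 1 ≤ m + n) :
    ∫ y, eta y ^ (m + 1) * conj (eta y) ^ (n + 1) =
      ((∫ y, eta y ^ m * conj (eta y) ^ (n + 1)) -
        ∫ y, eta y ^ (m + 1) * conj (eta y) ^ n) / (2 * I) := by
  rw [← integral_sub (integrable_eta_pow_mul_conj_eta_pow (by lia))
    (integrable_eta_pow_mul_conj_eta_pow (by lia)), ← integral_div]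
  congr 1 with y
  linear_combination eta y ^ m * conj (eta y) ^ n * eta_mul_conj_eta_eq_sub_div y

lemma integral_eta_mul_conj_eta : ∫ y, eta y * conj (eta y) = Real.pi := by
  simp only [eta_mul_conj_eta, integral_complex_ofReal, integral_univ_inv_one_add_sq]

lemma integral_eta_mul_conj_eta_sq : ∫ y, eta y * conj (eta y) ^ 2 = Real.pi / 2 * I := by
  have h := integral_eta_pow_succ_mul_conj_eta_pow_succ (m := 0) (n := 1) le_rfl
  have h_sq := integral_conj_eta_pow_mul_eta_pow 2 0
  simp only [pow_zero, one_mul, mul_one, integral_eta_sq, map_zero] at h_sq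
  simp only [zero_add, pow_zero, one_mul, pow_one, Nat.reduceAdd, h_sq,
    integral_eta_mul_conj_eta] at h
  rw [h, div_eq_iff (by simp)]
  linear_combination -Real.pi * I_sq

lemma integral_eta_sq_mul_conj_eta : ∫ y, eta y ^ 2 * conj (eta y) = -(Real.pi / 2 * I) := by
  simpa [integral_eta_mul_conj_eta_sq, conj_ofNat] using integral_conj_eta_pow_mul_eta_pow 1 2

lemma integral_eta_sq_mul_conj_eta_sq : ∫ y, eta y ^ 2 * conj (eta y) ^ 2 = Real.pi / 2 := by
  have h := integral_eta_pow_succ_mul_conj_eta_pow_succ (m := 1) (n := 1) one_le_two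
  simp only [pow_one, Nat.reduceAdd, integral_eta_mul_conj_eta_sq,
    integral_eta_sq_mul_conj_eta] at h
  rw [h, div_eq_iff (by simp)]
  ring

lemma integral_eta_combination_mul_conj (A B C D : ℂ) :
    ∫ y, (A * eta y + B * eta y ^ 2) * conj (C * eta y + D * eta y ^ 2) =
      Real.pi * (A * conj C) + Real.pi / 2 * (B * conj D) +
        Real.pi / 2 * I * (A * conj D - B * conj C) := by
  have h_int (m n : ℕ) (hmn : 2 ≤ m + n) (c : ℂ) :
      Integrable fun y => c * (eta y ^ m * conj (eta y) ^ n) :=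
    (integrable_eta_pow_mul_conj_eta_pow hmn).const_mul c
  have h_expand (y : ℝ) :
      (A * eta y + B * eta y ^ 2) * conj (C * eta y + D * eta y ^ 2) =
        A * conj C * (eta y ^ 1 * conj (eta y) ^ 1) + B * conj D * (eta y ^ 2 * conj (eta y) ^ 2) +
        (A * conj D * (eta y ^ 1 * conj (eta y) ^ 2) +
          B * conj C * (eta y ^ 2 * conj (eta y) ^ 1)) := by
    simp only [map_add, map_mul, map_pow]
    ring
  simp only [h_expand]
  rw [integral_add (.fun_add (h_int _ _ (by simp) _) (h_int _ _ (by simp) _))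
      (.fun_add (h_int _ _ (by simp) _) (h_int _ _ (by simp) _)),
    integral_add (h_int _ _ (by simp) _) (h_int _ _ (by simp) _),
    integral_add (h_int _ _ (by simp) _) (h_int _ _ (by simp) _)]
  simp only [integral_const_mul, pow_one, integral_eta_mul_conj_eta, integral_eta_mul_conj_eta_sq,
    integral_eta_sq_mul_conj_eta, integral_eta_sq_mul_conj_eta_sq]
  ring

lemma im_integral_eta_combination_mul_conj (A B C D : ℂ) :
    (∫ y, (A * eta y + B * eta y ^ 2) * conj (C * eta y + D * eta y ^ 2)).im =
      Real.pi * (A.im * C.re - A.re * C.im) + Real.pi / 2 * (B.im * D.re - B.re * D.im) +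
        Real.pi / 2 * (A.re * D.re + A.im * D.im - B.re * C.re - B.im * C.im) := by
  have h_half : (Real.pi / 2 : ℂ) = (Real.pi / 2 : ℝ) := by norm_cast
  rw [integral_eta_combination_mul_conj, h_half, mul_assoc (_ : ℂ) I, add_im, add_im,
    im_ofReal_mul, im_ofReal_mul, im_ofReal_mul, I_mul_im]
  simp only [sub_re, mul_re, mul_im, conj_re, conj_im]
  ring

end EtaIntegrals

section TangentVectors

open ComplexConjugate
open Complex hiding eta

/-- The coefficient of `η(μ(x - a))` in `e^{-iφ} V(X)(x)`, where `V(X)` is the tangent vector with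
coordinates `X` at the soliton `s(a,α,φ,μ)`. It is the same for all `a` and `φ`. -/
def tangentEtaCoeff (α μ : ℝ) (X : Fin 4 → ℝ) : ℂ := μ * (X 1 + I * α * X 2)

/-- The coefficient of `η(μ(x - a))²` in `e^{-iφ} V(X)(x)`, where `V(X)` is the tangent vector with
coordinates `X` at the soliton `s(a,α,φ,μ)`. It is the same for all `a` and `φ`. -/
def tangentEtaSqCoeff (α μ : ℝ) (X : Fin 4 → ℝ) : ℂ := α * (μ ^ 2 * X 0 + I * X 3)

variable (a α φ μ : ℝ)

lemma tangentEtaCoeff_re (X : Fin 4 → ℝ) : (tangentEtaCoeff α μ X).re = μ * X 1 := by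
  simp [tangentEtaCoeff]

lemma tangentEtaCoeff_im (X : Fin 4 → ℝ) : (tangentEtaCoeff α μ X).im = μ * (α * X 2) := by
  simp [tangentEtaCoeff]

lemma tangentEtaSqCoeff_re (X : Fin 4 → ℝ) :
    (tangentEtaSqCoeff α μ X).re = α * (μ ^ 2 * X 0) := by
  simp [tangentEtaSqCoeff, ← ofReal_pow]

lemma tangentEtaSqCoeff_im (X : Fin 4 → ℝ) : (tangentEtaSqCoeff α μ X).im = α * X 3 := by
  simp [tangentEtaSqCoeff, ← ofReal_pow]

lemma hasDerivAt_sol_position (x : ℝ) :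
    HasDerivAt (fun a' => sol a' α φ μ x)
      (exp (I * φ) * (α * μ ^ 2 * eta (μ * (x - a)) ^ 2)) a := by
  have h_inner : HasDerivAt (fun a' => μ * (x - a')) (-μ) a := by
    simpa using ((hasDerivAt_id a).const_sub x).const_mul μ
  have h := ((hasDerivAt_eta _).scomp a h_inner).const_mul (exp (I * φ) * α * μ)
  refine h.congr_deriv ?_
  rw [real_smul, ofReal_neg]
  ring

lemma hasDerivAt_sol_amplitude (x : ℝ) :
    HasDerivAt (fun α' => sol a α' φ μ x) (exp (I * φ) * (μ * eta (μ * (x - a)))) α := by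
  have h := (((hasDerivAt_id α).ofReal_comp.const_mul (exp (I * φ))).mul_const (μ : ℂ)).mul_const
    (eta (μ * (x - a)))
  exact h.congr_deriv (by push_cast; ring)

lemma hasDerivAt_sol_phase (x : ℝ) :
    HasDerivAt (fun φ' => sol a α φ' μ x)
      (exp (I * φ) * (I * α * μ * eta (μ * (x - a)))) φ := by
  have h := ((((hasDerivAt_id φ).ofReal_comp.const_mul I).cexp.mul_const (α : ℂ)).mul_const
    (μ : ℂ)).mul_const (eta (μ * (x - a)))
  exact h.congr_deriv (by push_cast [id]; ring)

lemma hasDerivAt_sol_scale (x : ℝ) :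
    HasDerivAt (fun μ' => sol a α φ μ' x)
      (exp (I * φ) * (I * α * eta (μ * (x - a)) ^ 2)) μ := by
  have h_inner : HasDerivAt (fun μ' => μ' * (x - a)) (x - a) μ := by
    simpa using (hasDerivAt_id μ).mul_const (x - a)
  have h := ((hasDerivAt_id μ).ofReal_comp.const_mul (exp (I * φ) * α)).mul
    ((hasDerivAt_eta _).scomp μ h_inner)
  have h_eta := ofReal_add_I_mul_eta (μ * (x - a))
  refine h.congr_deriv ?_
  simp only [id, Function.comp_apply, real_smul]
  push_cast at h_eta ⊢
  -- `η - y η² = i η²`, that is, `(y + i) η = 1` multiplied by `η`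
  linear_combination -exp (I * φ) * α * eta (μ * (x - a)) * h_eta

lemma Vfield_eq_exp_mul (X : Fin 4 → ℝ) (x : ℝ) :
    Vfield a α φ μ X x = exp (I * φ) *
      (tangentEtaCoeff α μ X * eta (μ * (x - a)) +
        tangentEtaSqCoeff α μ X * eta (μ * (x - a)) ^ 2) := by
  rw [Vfield, (hasDerivAt_sol_position a α φ μ x).deriv,
    (hasDerivAt_sol_amplitude a α φ μ x).deriv, (hasDerivAt_sol_phase a α φ μ x).deriv,
    (hasDerivAt_sol_scale a α φ μ x).deriv, tangentEtaCoeff, tangentEtaSqCoeff]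
  ring

lemma integral_Vfield_mul_conj (X Y : Fin 4 → ℝ) :
    ∫ x, Vfield a α φ μ X x * conj (Vfield a α φ μ Y x) =
      |μ⁻¹| • ∫ y,
        (tangentEtaCoeff α μ X * eta y + tangentEtaSqCoeff α μ X * eta y ^ 2) *
          conj (tangentEtaCoeff α μ Y * eta y + tangentEtaSqCoeff α μ Y * eta y ^ 2) := by
  have h_phase (z w : ℂ) : exp (I * φ) * z * conj (exp (I * φ) * w) = z * conj w := by
    rw [map_mul, mul_mul_mul_comm, mul_conj', norm_exp_I_mul_ofReal, ofReal_one, one_pow, one_mul]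
  simp only [Vfield_eq_exp_mul, h_phase]
  rw [← integral_comp_mul_sub_right μ a]

end TangentVectors

theorem statement7_general
    (a α φ μ : ℝ) (hα : α ≠ 0) (hμ : μ ≠ 0) (X Y : Fin 4 → ℝ) :
    (∫ x : ℝ, Vfield a α φ μ X x * (starRingEnd ℂ) (Vfield a α φ μ Y x)).im
      = Real.pi / 2 * α ^ 2 * |μ| *
        ((μ / α) * (X 1 * Y 0 - X 0 * Y 1) + (X 3 * Y 0 - X 0 * Y 3)
          + (2 / α) * (X 2 * Y 1 - X 1 * Y 2) + (1 / μ) * (X 2 * Y 3 - X 3 * Y 2)) := by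
  have h_abs : |μ| = μ ^ 2 * |μ⁻¹| := by
    rw [← sq_abs, abs_inv, sq, mul_inv_cancel_right₀ (abs_ne_zero.2 hμ)]
  rw [integral_Vfield_mul_conj, Complex.smul_im, im_integral_eta_combination_mul_conj, h_abs]
  simp only [tangentEtaCoeff_re, tangentEtaCoeff_im, tangentEtaSqCoeff_re, tangentEtaSqCoeff_im,
    smul_eq_mul]
  field_simp
  ring

/-- the restriction of the symplectic form to the manifold of
solitons, in the coordinates `(a, α, φ, μ)`. -/
theorem statement7
    (a α φ μ : ℝ) (hα : 0 < α) (hμ : 0 < μ) (X Y : Fin 4 → ℝ) :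
    (∫ x : ℝ, Vfield a α φ μ X x * (starRingEnd ℂ) (Vfield a α φ μ Y x)).im
      = Real.pi / 2 * α ^ 2 * μ *
        ((μ / α) * (X 1 * Y 0 - X 0 * Y 1) + (X 3 * Y 0 - X 0 * Y 3)
          + (2 / α) * (X 2 * Y 1 - X 1 * Y 2) + (1 / μ) * (X 2 * Y 3 - X 3 * Y 2)) := by
  simpa only [abs_of_pos hμ] using statement7_general a α φ μ hα.ne' hμ.ne' X Y
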